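/- Let μ be a Borel probability measure on [0,1)^d assigning zero mass to the boundary of every dyadic cube, and let ℓ ∈ ℕ. Then for μ-almost every x, (1/n)·( −log₂ μ(Q_n(x)) − (1/ℓ)·Σ_{i=1}^{n} H(μ_ℓ^{Q_i(x)}) ) → 0 as n → ∞. -/

import Mathlib

open MeasureTheory Filter Metric Set

/-- The half-open dyadic cell of level `n` with index `j`, i.e. `∏ᵢ [jᵢ/2ⁿ, (jᵢ+1)/2ⁿ)`. -/
def dyadicCell (d n : ℕ) (j : Fin d → ℤ) : Set (EuclideanSpace ℝ (Fin d)) :=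
  {y | ∀ i, (j i : ℝ) / 2 ^ n ≤ y i ∧ y i < ((j i : ℝ) + 1) / 2 ^ n}

/-- The index of the level-`n` dyadic cube containing `x`. -/
noncomputable def dyadicIdx (d n : ℕ) (x : EuclideanSpace ℝ (Fin d)) : Fin d → ℤ :=
  fun i => ⌊(2 : ℝ) ^ n * x i⌋

/-- `Q_n(x)`: the (unique) half-open dyadic cube of level `n` containing `x`. -/
noncomputable def Qcube (d n : ℕ) (x : EuclideanSpace ℝ (Fin d)) :
    Set (EuclideanSpace ℝ (Fin d)) :=
  dyadicCell d n (dyadicIdx d n x)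

/-- `Q` is a dyadic cube (of some level) inside the unit cube `[0,1)^d`. -/
def IsDyadicCube (d : ℕ) (Q : Set (EuclideanSpace ℝ (Fin d))) : Prop :=
  ∃ (n : ℕ) (j : Fin d → ℤ), (∀ i, 0 ≤ j i ∧ j i < 2 ^ n) ∧ Q = dyadicCell d n j

/-- The half-open unit cube `[0,1)^d`. -/
def unitCube (d : ℕ) : Set (EuclideanSpace ℝ (Fin d)) := dyadicCell d 0 0

/-- `H(μ_ℓ^{Q_n(x)})`: the base-2 entropy of the probability vector given by the relative
`μ`-measures of the `2^{ℓd}` level-`ℓ` dyadic subcubes of `Q_n(x)` (with the convention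
`0·log 0 = 0`). -/
noncomputable def condEntropy' (d ℓ n : ℕ) (μ : Measure (EuclideanSpace ℝ (Fin d)))
    (x : EuclideanSpace ℝ (Fin d)) : ℝ :=
  ∑ k : Fin d → Fin (2 ^ ℓ),
    (fun p : ℝ => -(p * Real.logb 2 p))
      ((μ (dyadicCell d (n + ℓ)
          (fun i => 2 ^ ℓ * dyadicIdx d n x i + ((k i : ℕ) : ℤ)))).toReal /
        (μ (Qcube d n x)).toReal)

/-!
Write `L_n(x) = -log₂ μ(Q_n(x))`. The increment `I_n = L_{n+ℓ} - L_n` is the conditional information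
of the position of `Q_{n+ℓ}(x)` inside `Q_n(x)`, and its conditional expectation given the
σ-algebra `ℱ_n` of the level-`n` cubes is the entropy `H(μ_ℓ^{Q_n(x)})`. Since `p log² p` is bounded
on `[0, 1]`, the `I_n` are bounded in `L²`. The differences `I_n - E[I_n | ℱ_n]` are
`ℱ_{n+ℓ}`-measurable, so they are orthogonal at distance at least `ℓ`, and their averages tend to
`0` almost everywhere: Chebyshev and Borel–Cantelli give this along the squares, and the sum of
`|I_n - E[I_n | ℱ_n]|` over a block between consecutive squares is controlled in the same way.
Finally `∑ I_i` telescopes to `ℓ L_n` up to a fixed constant and boundary terms of size at most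
`I_n`, which is `o(n)`.
-/

open ProbabilityTheory
open scoped Topology

section SquareIntegrable

variable {Ω : Type*} {mΩ : MeasurableSpace Ω} {μ : Measure Ω}

theorem ae_tendsto_zero_of_summable_integral_sq {W : ℕ → Ω → ℝ} (hW : ∀ k, MemLp (W k) 2 μ)
    (hsum : Summable fun k => ∫ x, W k x ^ 2 ∂μ) :
    ∀ᵐ x ∂μ, Tendsto (fun k => W k x) atTop (𝓝 0) := by
  have hnorm : ∀ k, eLpNorm (fun x => W k x ^ 2) 1 μ = ENNReal.ofReal (∫ x, W k x ^ 2 ∂μ) := by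
    intro k
    rw [eLpNorm_one_eq_lintegral_enorm,
      ← ofReal_integral_norm_eq_lintegral_enorm (hW k).integrable_sq]
    simp only [norm_pow, Real.norm_eq_abs, sq_abs]
  have hfin : ∑' k, eLpNorm (fun x => W k x ^ 2) 1 μ ≠ ⊤ := by
    simpa only [hnorm] using hsum.tsum_ofReal_ne_top
  filter_upwards [summable_norm_of_tsum_eLpNorm_ne_top le_rfl
    (fun k => (hW k).integrable_sq.aestronglyMeasurable) hfin] with x hx
  have hsq : Tendsto (fun k => √(W k x ^ 2)) atTop (𝓝 √0) := hx.of_norm.tendsto_atTop_zero.sqrt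
  simp only [Real.sqrt_sq_eq_abs, Real.sqrt_zero] at hsq
  exact (tendsto_zero_iff_abs_tendsto_zero _).2 hsq

theorem ae_tendsto_div_nat_of_integral_sq_le {Y : ℕ → Ω → ℝ} {C : ℝ}
    (hY : ∀ k, MemLp (Y k) 2 μ) (hC : ∀ k, ∫ x, Y k x ^ 2 ∂μ ≤ C) :
    ∀ᵐ x ∂μ, Tendsto (fun k : ℕ => Y k x / k) atTop (𝓝 0) := by
  have hbound : ∀ k : ℕ, ∫ x, (Y k x / k) ^ 2 ∂μ ≤ C * (1 / (k : ℝ) ^ 2) := by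
    intro k
    simp_rw [div_pow, integral_div, mul_one_div]
    gcongr
    exact hC k
  have hsum : Summable fun k : ℕ => C * (1 / (k : ℝ) ^ 2) :=
    (Real.summable_one_div_nat_pow.2 one_lt_two).mul_left C
  refine ae_tendsto_zero_of_summable_integral_sq (fun k => ?_)
    (hsum.of_nonneg_of_le (fun k => integral_nonneg fun x => sq_nonneg _) hbound)
  simpa only [div_eq_mul_inv] using (hY k).mul_const (k : ℝ)⁻¹

theorem integral_mul_le_of_integral_sq_le {X Y : Ω → ℝ} {C : ℝ} (hX : MemLp X 2 μ)
    (hY : MemLp Y 2 μ) (hXC : ∫ x, X x ^ 2 ∂μ ≤ C) (hYC : ∫ x, Y x ^ 2 ∂μ ≤ C) :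
    ∫ x, X x * Y x ∂μ ≤ C := by
  have hXY : ∫ x, 2 * (X x * Y x) ∂μ ≤ ∫ x, (X x ^ 2 + Y x ^ 2) ∂μ :=
    integral_mono ((hX.integrable_mul hY).const_mul 2) (hX.integrable_sq.add hY.integrable_sq)
      fun x => (mul_assoc 2 (X x) (Y x)).symm.trans_le (two_mul_le_add_sq (X x) (Y x))
  rw [integral_const_mul, integral_add hX.integrable_sq hY.integrable_sq] at hXY
  linarith

theorem integral_sum_sq {ι : Type*} {X : ι → Ω → ℝ} (hX : ∀ i, MemLp (X i) 2 μ) (s : Finset ι) :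
    ∫ x, (∑ i ∈ s, X i x) ^ 2 ∂μ = ∑ i ∈ s, ∑ j ∈ s, ∫ x, X i x * X j x ∂μ := by
  have hint : ∀ i j, Integrable (fun x => X i x * X j x) μ :=
    fun i j => (hX i).integrable_mul (hX j)
  simp_rw [sq, Finset.sum_mul_sum]
  rw [integral_finsetSum _ fun i _ => integrable_finsetSum _ fun j _ => hint i j]
  exact Finset.sum_congr rfl fun i _ => integral_finsetSum _ fun j _ => hint i j

theorem integral_sum_abs_sq_le {ι : Type*} {X : ι → Ω → ℝ} {C : ℝ} (hX : ∀ i, MemLp (X i) 2 μ)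
    (hC : ∀ i, ∫ x, X i x ^ 2 ∂μ ≤ C) (s : Finset ι) :
    ∫ x, (∑ i ∈ s, |X i x|) ^ 2 ∂μ ≤ (s.card : ℝ) ^ 2 * C := by
  have habs : ∀ i, ∫ x, |X i x| ^ 2 ∂μ ≤ C := by simpa only [sq_abs] using hC
  calc ∫ x, (∑ i ∈ s, |X i x|) ^ 2 ∂μ
      = ∑ i ∈ s, ∑ j ∈ s, ∫ x, |X i x| * |X j x| ∂μ := integral_sum_sq (fun i => (hX i).abs) s
    _ ≤ ∑ _i ∈ s, ∑ _j ∈ s, C := by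
        gcongr with i _ j _
        exact integral_mul_le_of_integral_sq_le (hX i).abs (hX j).abs (habs i) (habs j)
    _ = (s.card : ℝ) ^ 2 * C := by
        simp only [Finset.sum_const, nsmul_eq_mul]
        ring

theorem integral_sum_sq_le_of_orthogonal {X : ℕ → Ω → ℝ} {C : ℝ} {ℓ : ℕ}
    (hX : ∀ i, MemLp (X i) 2 μ) (hC : ∀ i, ∫ x, X i x ^ 2 ∂μ ≤ C)
    (horth : ∀ i j, i + ℓ ≤ j → ∫ x, X i x * X j x ∂μ = 0) (s : Finset ℕ) :
    ∫ x, (∑ i ∈ s, X i x) ^ 2 ∂μ ≤ s.card * (2 * ℓ * C) := by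
  have hC0 : 0 ≤ C := (integral_nonneg fun x => sq_nonneg (X 0 x)).trans (hC 0)
  have hzero : ∀ i j, j ∉ Finset.Ico (i - ℓ) (i + ℓ) → ∫ x, X i x * X j x ∂μ = 0 := by
    intro i j hj
    rcases lt_or_ge j (i - ℓ) with hlt | hge
    · simpa only [mul_comm] using horth j i (by omega)
    · exact horth i j (by simpa [hge] using hj)
  have hrow : ∀ i, ∑ j ∈ s, ∫ x, X i x * X j x ∂μ ≤ 2 * ℓ * C := by
    intro i
    let near := s.filter (· ∈ Finset.Ico (i - ℓ) (i + ℓ))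
    have hcard : near.card ≤ 2 * ℓ := by
      calc near.card ≤ (Finset.Ico (i - ℓ) (i + ℓ)).card :=
            Finset.card_le_card fun j hj => (Finset.mem_filter.1 hj).2
        _ ≤ 2 * ℓ := by rw [Nat.card_Ico]; omega
    calc ∑ j ∈ s, ∫ x, X i x * X j x ∂μ
        = ∑ j ∈ near, ∫ x, X i x * X j x ∂μ :=
          (Finset.sum_filter_of_ne fun j _ hne => not_imp_comm.1 (hzero i j) hne).symm
      _ ≤ ∑ _j ∈ near, C := by
          gcongr with j
          exact integral_mul_le_of_integral_sq_le (hX i) (hX j) (hC i) (hC j)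
      _ = near.card * C := by rw [Finset.sum_const, nsmul_eq_mul]
      _ ≤ 2 * ℓ * C := by
          gcongr
          exact_mod_cast hcard
  calc ∫ x, (∑ i ∈ s, X i x) ^ 2 ∂μ
      = ∑ i ∈ s, ∑ j ∈ s, ∫ x, X i x * X j x ∂μ := integral_sum_sq hX s
    _ ≤ ∑ _i ∈ s, 2 * ℓ * C := Finset.sum_le_sum fun i _ => hrow i
    _ = s.card * (2 * ℓ * C) := by rw [Finset.sum_const, nsmul_eq_mul]

theorem tendsto_sum_range_div_of_sq_subseq {a : ℕ → ℝ}
    (hsq : Tendsto (fun k : ℕ => (∑ i ∈ Finset.range (k ^ 2), a i) / (k : ℝ) ^ 2) atTop (𝓝 0))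
    (hgap : Tendsto (fun k : ℕ => (∑ i ∈ Finset.Ico (k ^ 2) ((k + 1) ^ 2), |a i|) / (k : ℝ) ^ 2)
      atTop (𝓝 0)) :
    Tendsto (fun n : ℕ => (∑ i ∈ Finset.range n, a i) / n) atTop (𝓝 0) := by
  have hsqrt : Tendsto Nat.sqrt atTop atTop :=
    tendsto_atTop_atTop.2 fun k => ⟨k ^ 2, fun n hn => Nat.le_sqrt'.2 hn⟩
  have hlim := (hsq.abs.add hgap).comp hsqrt
  rw [abs_zero, add_zero] at hlim
  refine squeeze_zero_norm' ?_ hlim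
  filter_upwards [eventually_ge_atTop 1] with n hn
  simp only [Function.comp_apply, Real.norm_eq_abs, abs_div, Nat.abs_cast, abs_pow, ← add_div]
  set k := n.sqrt
  have hk : 0 < k := Nat.sqrt_pos.2 hn
  have hkn : k ^ 2 ≤ n := Nat.sqrt_le' n
  have hnk : n ≤ (k + 1) ^ 2 := (Nat.lt_succ_sqrt' n).le
  have hsum : |∑ i ∈ Finset.range n, a i| ≤
      |∑ i ∈ Finset.range (k ^ 2), a i| + ∑ i ∈ Finset.Ico (k ^ 2) ((k + 1) ^ 2), |a i| := by
    rw [← Finset.sum_range_add_sum_Ico _ hkn]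
    refine (abs_add_le _ _).trans (add_le_add_right ?_ _)
    exact (Finset.abs_sum_le_sum_abs _ _).trans <|
      Finset.sum_le_sum_of_subset_of_nonneg (Finset.Ico_subset_Ico le_rfl hnk)
        fun _ _ _ => abs_nonneg _
  gcongr
  exact_mod_cast hkn

theorem ae_tendsto_sum_range_div_of_orthogonal {X : ℕ → Ω → ℝ} {C : ℝ} {ℓ : ℕ}
    (hX : ∀ i, MemLp (X i) 2 μ) (hC : ∀ i, ∫ x, X i x ^ 2 ∂μ ≤ C)
    (horth : ∀ i j, i + ℓ ≤ j → ∫ x, X i x * X j x ∂μ = 0) :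
    ∀ᵐ x ∂μ, Tendsto (fun n : ℕ => (∑ i ∈ Finset.range n, X i x) / n) atTop (𝓝 0) := by
  have hC0 : 0 ≤ C := (integral_nonneg fun x => sq_nonneg (X 0 x)).trans (hC 0)
  have hsq : ∀ᵐ x ∂μ, Tendsto
      (fun k : ℕ => (∑ i ∈ Finset.range (k ^ 2), X i x) / k / k) atTop (𝓝 0) := by
    refine ae_tendsto_div_nat_of_integral_sq_le (C := 2 * ℓ * C) (fun k => ?_) fun k => ?_
    · simpa only [div_eq_mul_inv] using
        (memLp_finsetSum _ fun i _ => hX i).mul_const (k : ℝ)⁻¹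
    · simp_rw [div_pow, integral_div]
      refine div_le_of_le_mul₀ (by positivity) (by positivity) ?_
      have hsum := integral_sum_sq_le_of_orthogonal hX hC horth (Finset.range (k ^ 2))
      rwa [Finset.card_range, Nat.cast_pow, mul_comm] at hsum
  have hgap : ∀ᵐ x ∂μ, Tendsto
      (fun k : ℕ => (∑ i ∈ Finset.Ico (k ^ 2) ((k + 1) ^ 2), |X i x|) / k / k) atTop (𝓝 0) := by
    refine ae_tendsto_div_nat_of_integral_sq_le (C := 3 ^ 2 * C) (fun k => ?_) fun k => ?_
    · simpa only [div_eq_mul_inv] using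
        (memLp_finsetSum (f := fun i x => |X i x|) _ fun i _ => (hX i).abs).mul_const (k : ℝ)⁻¹
    · simp_rw [div_pow, integral_div]
      rcases k.eq_zero_or_pos with rfl | hk
      · simp only [Nat.cast_zero, zero_pow two_ne_zero, div_zero]
        positivity
      refine div_le_of_le_mul₀ (by positivity) (by positivity) ?_
      have hcard : (Finset.Ico (k ^ 2) ((k + 1) ^ 2)).card ≤ 3 * k := by
        rw [Nat.card_Ico, add_sq]
        omega
      calc _ ≤ ((Finset.Ico (k ^ 2) ((k + 1) ^ 2)).card : ℝ) ^ 2 * C :=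
            integral_sum_abs_sq_le hX hC _
        _ ≤ (3 * k) ^ 2 * C := by
            gcongr
            exact_mod_cast hcard
        _ = 3 ^ 2 * C * k ^ 2 := by ring
  filter_upwards [hsq, hgap] with x hsqx hgapx
  simp only [div_div, ← sq] at hsqx hgapx
  exact tendsto_sum_range_div_of_sq_subseq hsqx hgapx

theorem integral_sub_condExp_sq_le {m : MeasurableSpace Ω} [IsFiniteMeasure μ] (hm : m ≤ mΩ)
    {X : Ω → ℝ} (hX : MemLp X 2 μ) :
    ∫ x, (X x - (μ[X | m]) x) ^ 2 ∂μ ≤ ∫ x, X x ^ 2 ∂μ := by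
  calc ∫ x, (X x - (μ[X | m]) x) ^ 2 ∂μ
      = ∫ x, (Var[X; μ | m]) x ∂μ := (integral_condExp hm).symm
    _ ≤ ∫ x, (μ[X ^ 2 | m]) x ∂μ :=
        integral_mono_ae integrable_condVar integrable_condExp (condVar_ae_le_condExp_sq hm hX)
    _ = ∫ x, X x ^ 2 ∂μ := integral_condExp hm

theorem integral_mul_sub_condExp_eq_zero {m : MeasurableSpace Ω} [IsFiniteMeasure μ]
    (hm : m ≤ mΩ) {X Y : Ω → ℝ} (hYm : StronglyMeasurable[m] Y) (hY : MemLp Y 2 μ)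
    (hX : MemLp X 2 μ) : ∫ x, Y x * (X x - (μ[X | m]) x) ∂μ = 0 := by
  have hXint : Integrable X μ := hX.integrable one_le_two
  have hYE : Integrable (fun x => Y x * (μ[X | m]) x) μ := hY.integrable_mul (hX.condExp one_le_two)
  have hpull : ∫ x, Y x * X x ∂μ = ∫ x, Y x * (μ[X | m]) x ∂μ :=
    (integral_condExp hm).symm.trans <| integral_congr_ae <|
      condExp_mul_of_stronglyMeasurable_left hYm (hY.integrable_mul hX) hXint
  have hYX : Integrable (fun x => Y x * X x) μ := hY.integrable_mul hX
  simp_rw [mul_sub]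
  rw [integral_sub hYX hYE, hpull, sub_self]

theorem ae_tendsto_sum_sub_condExp_div [IsFiniteMeasure μ] (ℱ : Filtration ℕ mΩ)
    {X : ℕ → Ω → ℝ} {C : ℝ} {ℓ : ℕ} (hX : ∀ i, MemLp (X i) 2 μ)
    (hC : ∀ i, ∫ x, X i x ^ 2 ∂μ ≤ C) (hadapted : ∀ i, StronglyMeasurable[ℱ (i + ℓ)] (X i)) :
    ∀ᵐ x ∂μ, Tendsto
      (fun n : ℕ => (∑ i ∈ Finset.range n, (X i x - (μ[X i | ℱ i]) x)) / n) atTop (𝓝 0) := by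
  have hL2 : ∀ i, MemLp (X i - μ[X i | ℱ i]) 2 μ := fun i => (hX i).sub ((hX i).condExp one_le_two)
  refine ae_tendsto_sum_range_div_of_orthogonal (ℓ := ℓ) hL2
    (fun i => (integral_sub_condExp_sq_le (ℱ.le i) (hX i)).trans (hC i)) fun i j hij => ?_
  have hmeas : StronglyMeasurable[ℱ j] (X i - μ[X i | ℱ i]) :=
    ((hadapted i).mono (ℱ.mono hij)).sub
      (stronglyMeasurable_condExp.mono (ℱ.mono ((Nat.le_add_right i ℓ).trans hij)))
  exact integral_mul_sub_condExp_eq_zero (ℱ.le j) hmeas (hL2 i) (hX j)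

end SquareIntegrable

theorem sum_range_shift_sub (L : ℕ → ℝ) (m n : ℕ) :
    ∑ i ∈ Finset.range n, (L (m + i) - L i) = ∑ j ∈ Finset.range m, (L (n + j) - L j) := by
  have h : ∑ i ∈ Finset.range (m + n), L i = ∑ i ∈ Finset.range (n + m), L i := by rw [add_comm]
  rw [Finset.sum_range_add, Finset.sum_range_add] at h
  simp_rw [Finset.sum_sub_distrib]
  linarith

theorem tendsto_sub_average_of_increments {L H : ℕ → ℝ} {ℓ : ℕ} (hℓ : 0 < ℓ) (hL : Monotone L)
    (hstep : Tendsto (fun n : ℕ => (L (n + ℓ) - L n) / n) atTop (𝓝 0))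
    (havg : Tendsto
      (fun n : ℕ => (∑ i ∈ Finset.range n, (L (i + 1 + ℓ) - L (i + 1) - H (i + 1))) / n)
      atTop (𝓝 0)) :
    Tendsto (fun n : ℕ => (1 / (n : ℝ)) * (L n - (1 / (ℓ : ℝ)) * ∑ i ∈ Finset.Icc 1 n, H i))
      atTop (𝓝 0) := by
  have hboundary : ∀ j ∈ Finset.range ℓ,
      Tendsto (fun n : ℕ => (L (n + j + 1) - L n) / n) atTop (𝓝 0) := by
    intro j hj
    have hjℓ : j + 1 ≤ ℓ := Finset.mem_range.1 hj
    refine squeeze_zero (fun n => ?_) (fun n => ?_) hstep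
    · exact div_nonneg (sub_nonneg.2 (hL (by omega))) n.cast_nonneg
    · gcongr
      exact hL (by omega)
  have hconst := tendsto_const_div_atTop_nhds_zero_nat (∑ j ∈ Finset.range ℓ, L (j + 1))
  have hlim := ((havg.sub (tendsto_finsetSum _ hboundary)).add hconst).const_mul (1 / (ℓ : ℝ))
  simp only [Finset.sum_const_zero, sub_zero, add_zero, mul_zero] at hlim
  refine hlim.congr fun n => ?_
  have htele : ∑ i ∈ Finset.range n, (L (i + 1 + ℓ) - L (i + 1)) =
      ∑ j ∈ Finset.range ℓ, (L (n + j + 1) - L n) + ℓ * L n - ∑ j ∈ Finset.range ℓ, L (j + 1) := by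
    have h := sum_range_shift_sub (fun i => L (i + 1)) ℓ n
    simp only [Finset.sum_sub_distrib, Finset.sum_const, Finset.card_range, nsmul_eq_mul,
      add_comm ℓ, add_right_comm _ 1 ℓ] at h ⊢
    linarith
  have hshift : ∑ i ∈ Finset.Icc 1 n, H i = ∑ i ∈ Finset.range n, H (i + 1) := by
    rw [Finset.range_eq_Ico, Finset.sum_Ico_add' H 0 n 1]
    rfl
  have hℓ0 : (ℓ : ℝ) ≠ 0 := by exact_mod_cast hℓ.ne'
  rw [hshift, ← Finset.sum_div, Finset.sum_sub_distrib, htele]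
  field_simp
  ring

section Information

variable {κ : Type*} [MeasurableSpace κ]

/-- The information `-log₂ P({c})` (in bits) of the outcome `c` under `P`. -/
noncomputable def information (P : Measure κ) (c : κ) : ℝ :=
  -Real.logb 2 (P.real {c})

/-- The base-2 Shannon entropy of a measure on a finite type, with `0 · log₂ 0 = 0` supplied by
`Real.logb 2 0 = 0`. -/
noncomputable def shannonEntropy [Fintype κ] (P : Measure κ) : ℝ :=
  ∑ c, -(P.real {c} * Real.logb 2 (P.real {c}))

theorem mul_logb_two_sq_le {p : ℝ} (h0 : 0 ≤ p) (h1 : p ≤ 1) :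
    p * Real.logb 2 p ^ 2 ≤ 4 / Real.log 2 ^ 2 := by
  rcases h0.eq_or_lt with rfl | hp
  · rw [zero_mul]
    positivity
  have hsqrt : |Real.log p / 2 * √p| < 1 := by
    simpa only [Real.log_sqrt h0] using
      Real.abs_log_mul_self_lt (√p) (Real.sqrt_pos.2 hp) (Real.sqrt_le_one.2 h1)
  have hsq : (Real.log p / 2 * √p) ^ 2 ≤ 1 := (sq_le_one_iff_abs_le_one _).2 hsqrt.le
  rw [mul_pow, Real.sq_sqrt h0] at hsq
  rw [Real.logb, div_pow, ← mul_div_assoc]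
  gcongr
  linarith

variable [MeasurableSingletonClass κ]

theorem integral_information [Fintype κ] (P : Measure κ) [IsFiniteMeasure P] :
    ∫ c, information P c ∂P = shannonEntropy P := by
  simp only [integral_fintype Integrable.of_finite, information, shannonEntropy, smul_eq_mul,
    mul_neg]

theorem integral_information_sq_le [Fintype κ] (P : Measure κ) [IsProbabilityMeasure P] :
    ∫ c, information P c ^ 2 ∂P ≤ Fintype.card κ * (4 / Real.log 2 ^ 2) := by
  calc ∫ c, information P c ^ 2 ∂P
      = ∑ c, P.real {c} * Real.logb 2 (P.real {c}) ^ 2 := by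
        simp only [integral_fintype Integrable.of_finite, information, smul_eq_mul, neg_sq]
    _ ≤ ∑ _c : κ, 4 / Real.log 2 ^ 2 :=
        Finset.sum_le_sum fun c _ => mul_logb_two_sq_le measureReal_nonneg measureReal_le_one
    _ = Fintype.card κ * (4 / Real.log 2 ^ 2) := by
        rw [Finset.sum_const, nsmul_eq_mul, Finset.card_univ]

variable {β : Type*} [mβ : MeasurableSpace β]

theorem measurable_information_kernel [Countable κ] (η : Kernel β κ) :
    Measurable fun p : β × κ => information (η p.1) p.2 :=
  measurable_from_prod_countable_left fun c =>
    ((η.measurable_coe (measurableSet_singleton c)).ennreal_toReal.log.div_const _).neg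

theorem memLp_information_compProd [Finite κ] (ν : Measure β) [IsFiniteMeasure ν]
    (η : Kernel β κ) [IsMarkovKernel η] :
    MemLp (fun p : β × κ => information (η p.1) p.2) 2 (ν ⊗ₘ η) := by
  cases nonempty_fintype κ
  have hmeas := measurable_information_kernel η
  rw [memLp_two_iff_integrable_sq hmeas.aestronglyMeasurable,
    Measure.integrable_compProd_iff (hmeas.pow_const 2).aestronglyMeasurable]
  refine ⟨ae_of_all _ fun b => Integrable.of_finite, ?_⟩
  simp only [norm_pow, Real.norm_eq_abs, sq_abs]
  have hmeas_integral : StronglyMeasurable fun b => ∫ c, information (η b) c ^ 2 ∂(η b) :=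
    (hmeas.pow_const 2).stronglyMeasurable.integral_kernel_prod_right'
  refine .of_bound hmeas_integral.aestronglyMeasurable (Fintype.card κ * (4 / Real.log 2 ^ 2))
    (ae_of_all _ fun b => ?_)
  rw [Real.norm_of_nonneg (integral_nonneg fun c => sq_nonneg _)]
  exact integral_information_sq_le (η b)

theorem integral_information_sq_compProd_le [Fintype κ] (ν : Measure β) [IsFiniteMeasure ν]
    (η : Kernel β κ) [IsMarkovKernel η] :
    ∫ p : β × κ, information (η p.1) p.2 ^ 2 ∂(ν ⊗ₘ η) ≤
      ν.real univ * (Fintype.card κ * (4 / Real.log 2 ^ 2)) := by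
  rw [Measure.integral_compProd (memLp_information_compProd ν η).integrable_sq]
  calc ∫ b, ∫ c, information (η b) c ^ 2 ∂(η b) ∂ν
      ≤ ∫ _b, (Fintype.card κ * (4 / Real.log 2 ^ 2) : ℝ) ∂ν :=
        integral_mono_of_nonneg (ae_of_all _ fun b => integral_nonneg fun c => sq_nonneg _)
          (integrable_const _) (ae_of_all _ fun b => integral_information_sq_le (η b))
    _ = ν.real univ * (Fintype.card κ * (4 / Real.log 2 ^ 2)) := by
        rw [integral_const, smul_eq_mul]

variable {Ω : Type*} {mΩ : MeasurableSpace Ω} {μ : Measure Ω} {X : Ω → β} {Y : Ω → κ}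

theorem ae_measure_preimage_singleton_ne_zero [Countable β] [MeasurableSingletonClass β]
    (hX : Measurable X) : ∀ᵐ x ∂μ, μ (X ⁻¹' {X x}) ≠ 0 := by
  have h : ∀ᵐ b ∂μ.map X, μ.map X {b} ≠ 0 := ae_iff_of_countable.2 fun _ hb => hb
  filter_upwards [ae_of_ae_map hX.aemeasurable h] with x hx
  rwa [Measure.map_apply hX (measurableSet_singleton _)] at hx

variable [Nonempty κ]

/-- The conditional information `-log₂ P(Y = Y(x) | X = X(x))` of `Y` given `X`, at the
point `x`. -/
noncomputable def condInformation [Countable κ] (Y : Ω → κ) (X : Ω → β) (μ : Measure Ω)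
    [IsFiniteMeasure μ] (x : Ω) : ℝ :=
  information (condDistrib Y X μ (X x)) (Y x)

variable [IsFiniteMeasure μ]

theorem memLp_condInformation [Finite κ] (hX : Measurable X) (hY : Measurable Y) :
    MemLp (condInformation Y X μ) 2 μ := by
  have h := memLp_information_compProd (μ.map X) (condDistrib Y X μ)
  rw [compProd_map_condDistrib hY.aemeasurable] at h
  exact h.comp_of_map (hX.prodMk hY).aemeasurable

theorem integral_condInformation_sq_le [Fintype κ] (hX : Measurable X) (hY : Measurable Y) :
    ∫ x, condInformation Y X μ x ^ 2 ∂μ ≤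
      μ.real univ * (Fintype.card κ * (4 / Real.log 2 ^ 2)) := by
  have h := integral_information_sq_compProd_le (μ.map X) (condDistrib Y X μ)
  rw [compProd_map_condDistrib hY.aemeasurable, integral_map (hX.prodMk hY).aemeasurable
    ((measurable_information_kernel _).pow_const 2).aestronglyMeasurable,
    map_measureReal_apply hX .univ] at h
  exact h

theorem condExp_condInformation [Fintype κ] (hX : Measurable X) (hY : Measurable Y) :
    μ[condInformation Y X μ | mβ.comap X] =ᵐ[μ]
      fun x => shannonEntropy (condDistrib Y X μ (X x)) := by
  simp_rw [← integral_information]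
  exact condExp_prod_ae_eq_integral_condDistrib hX hY.aemeasurable
    (measurable_information_kernel (condDistrib Y X μ)).stronglyMeasurable
    ((memLp_condInformation hX hY).integrable one_le_two)

theorem measurable_condInformation [Countable κ] {m : MeasurableSpace Ω} (hX : Measurable[m] X)
    (hY : Measurable[m] Y) : Measurable[m] (condInformation Y X μ) :=
  (measurable_information_kernel (condDistrib Y X μ)).comp (f := fun x => (X x, Y x))
    (hX.prodMk hY)

theorem condDistrib_real_singleton [Countable κ] [MeasurableSingletonClass β] (hX : Measurable X)
    (hY : Measurable Y) {b : β} (hb : μ (X ⁻¹' {b}) ≠ 0) (c : κ) :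
    (condDistrib Y X μ b).real {c} = μ.real (X ⁻¹' {b} ∩ Y ⁻¹' {c}) / μ.real (X ⁻¹' {b}) := by
  rw [← Measure.map_apply hX (measurableSet_singleton b)] at hb
  rw [measureReal_def, condDistrib_apply_of_ne_zero hY b hb,
    Measure.map_apply hX (measurableSet_singleton b),
    Measure.map_apply (hX.prodMk hY) ((measurableSet_singleton b).prod (measurableSet_singleton c)),
    ENNReal.toReal_mul, ENNReal.toReal_inv, inv_mul_eq_div, mk_preimage_prod]
  rfl

theorem ae_tendsto_sum_condInformation_sub_entropy_div [Fintype κ] {ℓ : ℕ} {X : ℕ → Ω → β}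
    {Y : ℕ → Ω → κ} (hX : ∀ i, Measurable (X i))
    (hmono : Monotone fun i => mβ.comap (X i)) (hY : ∀ i, Measurable[mβ.comap (X (i + ℓ))] (Y i)) :
    ∀ᵐ x ∂μ, Tendsto (fun n : ℕ => (∑ i ∈ Finset.range n,
      (condInformation (Y i) (X i) μ x - shannonEntropy (condDistrib (Y i) (X i) μ (X i x)))) / n)
      atTop (𝓝 0) := by
  let ℱ : Filtration ℕ mΩ := ⟨fun i => mβ.comap (X i), hmono, fun i => (hX i).comap_le⟩
  have hY' : ∀ i, Measurable (Y i) := fun i => (hY i).mono (ℱ.le (i + ℓ)) le_rfl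
  have hadapted : ∀ i, StronglyMeasurable[ℱ (i + ℓ)] (condInformation (Y i) (X i) μ) := fun i =>
    (measurable_condInformation
      ((comap_measurable (X i)).mono (hmono (Nat.le_add_right i ℓ)) le_rfl)
      (hY i)).stronglyMeasurable
  filter_upwards [ae_tendsto_sum_sub_condExp_div ℱ (fun i => memLp_condInformation (hX i) (hY' i))
    (fun i => integral_condInformation_sq_le (hX i) (hY' i)) hadapted,
    ae_all_iff.2 fun i => condExp_condInformation (hX i) (hY' i)] with x hx hcond
  refine hx.congr fun n => ?_
  simp only [ℱ, hcond]

theorem ae_tendsto_condInformation_div [Finite κ] {X : ℕ → Ω → β} {Y : ℕ → Ω → κ}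
    (hX : ∀ i, Measurable (X i)) (hY : ∀ i, Measurable (Y i)) :
    ∀ᵐ x ∂μ, Tendsto (fun n : ℕ => condInformation (Y n) (X n) μ x / n) atTop (𝓝 0) := by
  cases nonempty_fintype κ
  exact ae_tendsto_div_nat_of_integral_sq_le (fun i => memLp_condInformation (hX i) (hY i))
    fun i => integral_condInformation_sq_le (hX i) (hY i)

end Information

section Dyadic

variable {d ℓ n : ℕ} {x : EuclideanSpace ℝ (Fin d)}

theorem dyadicCell_eq_preimage (d n : ℕ) (j : Fin d → ℤ) :
    dyadicCell d n j = dyadicIdx d n ⁻¹' {j} := by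
  have h2 : (0 : ℝ) < 2 ^ n := by positivity
  ext x
  simp only [dyadicCell, dyadicIdx, mem_ofPred_eq, mem_preimage, mem_singleton_iff, funext_iff]
  refine forall_congr' fun i => ?_
  rw [Int.floor_eq_iff, div_le_iff₀ h2, lt_div_iff₀ h2, mul_comm]

theorem Qcube_eq_preimage (d n : ℕ) (x : EuclideanSpace ℝ (Fin d)) :
    Qcube d n x = dyadicIdx d n ⁻¹' {dyadicIdx d n x} :=
  dyadicCell_eq_preimage d n _

theorem measurable_dyadicIdx (d n : ℕ) : Measurable (dyadicIdx d n) := by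
  unfold dyadicIdx
  fun_prop

theorem dyadicIdx_eq_ediv (d ℓ n : ℕ) (x : EuclideanSpace ℝ (Fin d)) (i : Fin d) :
    dyadicIdx d n x i = dyadicIdx d (n + ℓ) x i / (2 ^ ℓ : ℕ) := by
  have hscale : (2 : ℝ) ^ n * x i = 2 ^ (n + ℓ) * x i / (2 ^ ℓ : ℕ) := by
    push_cast
    rw [pow_add]
    field_simp
  simp only [dyadicIdx, hscale, Int.floor_div_natCast]

theorem monotone_comap_dyadicIdx (d : ℕ) :
    Monotone fun n => MeasurableSpace.comap (dyadicIdx d n) inferInstance := by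
  refine monotone_nat_of_le_succ fun n => Measurable.comap_le ?_
  have hfactor : dyadicIdx d n =
      (fun (j : Fin d → ℤ) i => j i / (2 ^ 1 : ℕ)) ∘ dyadicIdx d (n + 1) :=
    funext fun x => funext fun i => dyadicIdx_eq_ediv d 1 n x i
  rw [hfactor]
  exact (measurable_of_countable _).comp (comap_measurable _)

theorem antitone_Qcube (x : EuclideanSpace ℝ (Fin d)) : Antitone fun n => Qcube d n x := by
  refine antitone_nat_of_succ_le fun n y hy => ?_
  simp only [Qcube_eq_preimage, mem_preimage, mem_singleton_iff] at hy ⊢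
  funext i
  simp only [dyadicIdx_eq_ediv d 1 n, hy]

/-- The position of the level-`(n + ℓ)` dyadic cube containing `x` inside `Q_n(x)`, i.e. the last
`ℓ` binary digits of each coordinate of its index. -/
noncomputable def dyadicDigit (d ℓ n : ℕ) (x : EuclideanSpace ℝ (Fin d)) : Fin d → Fin (2 ^ ℓ) :=
  fun i => (Int.divModEquiv (2 ^ ℓ) (dyadicIdx d (n + ℓ) x i)).2

theorem measurable_comap_dyadicDigit (d ℓ n : ℕ) :
    Measurable[MeasurableSpace.comap (dyadicIdx d (n + ℓ)) inferInstance] (dyadicDigit d ℓ n) :=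
  (measurable_of_countable fun (j : Fin d → ℤ) i => (Int.divModEquiv (2 ^ ℓ) (j i)).2).comp
    (comap_measurable _)

theorem measurable_dyadicDigit (d ℓ n : ℕ) : Measurable (dyadicDigit d ℓ n) :=
  (measurable_comap_dyadicDigit d ℓ n).mono (measurable_dyadicIdx d (n + ℓ)).comap_le le_rfl

theorem dyadicCell_add_eq_inter (d ℓ n : ℕ) (j : Fin d → ℤ) (k : Fin d → Fin (2 ^ ℓ)) :
    dyadicCell d (n + ℓ) (fun i => 2 ^ ℓ * j i + ((k i : ℕ) : ℤ)) =
      dyadicIdx d n ⁻¹' {j} ∩ dyadicDigit d ℓ n ⁻¹' {k} := by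
  have hsplit : ∀ (a b : ℤ) (c : Fin (2 ^ ℓ)), a = 2 ^ ℓ * b + ((c : ℕ) : ℤ) ↔
      a / (2 ^ ℓ : ℕ) = b ∧ (Int.divModEquiv (2 ^ ℓ) a).2 = c := by
    intro a b c
    have h := Equiv.eq_symm_apply (Int.divModEquiv (2 ^ ℓ)) (x := (b, c)) (y := a)
    rw [Int.divModEquiv_symm_apply, Prod.ext_iff] at h
    simpa [mul_comm] using h
  ext x
  simp only [dyadicCell_eq_preimage, mem_preimage, mem_inter_iff, mem_singleton_iff, funext_iff,
    hsplit, forall_and, dyadicIdx_eq_ediv d ℓ n, dyadicDigit]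

theorem Qcube_add_eq_inter (d ℓ n : ℕ) (x : EuclideanSpace ℝ (Fin d)) :
    Qcube d (n + ℓ) x = dyadicIdx d n ⁻¹' {dyadicIdx d n x} ∩
      dyadicDigit d ℓ n ⁻¹' {dyadicDigit d ℓ n x} := by
  have hx : x ∈ dyadicCell d (n + ℓ)
      (fun i => 2 ^ ℓ * dyadicIdx d n x i + ((dyadicDigit d ℓ n x i : ℕ) : ℤ)) := by
    rw [dyadicCell_add_eq_inter]
    exact ⟨rfl, rfl⟩
  rw [← dyadicCell_add_eq_inter, Qcube]
  rw [dyadicCell_eq_preimage] at hx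
  rw [hx]

variable {μ : Measure (EuclideanSpace ℝ (Fin d))}

theorem condEntropy'_eq_shannonEntropy [IsFiniteMeasure μ] (hx : μ (Qcube d n x) ≠ 0) :
    condEntropy' d ℓ n μ x = shannonEntropy
      (condDistrib (dyadicDigit d ℓ n) (dyadicIdx d n) μ (dyadicIdx d n x)) := by
  rw [Qcube_eq_preimage] at hx
  simp only [condEntropy', shannonEntropy, Qcube_eq_preimage, dyadicCell_add_eq_inter,
    ← measureReal_def,
    condDistrib_real_singleton (measurable_dyadicIdx d n) (measurable_dyadicDigit d ℓ n) hx]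

/-- The information `-log₂ μ(Q_n(x))` of the level-`n` dyadic cube containing `x`. -/
noncomputable def dyadicInformation (d : ℕ) (μ : Measure (EuclideanSpace ℝ (Fin d)))
    (x : EuclideanSpace ℝ (Fin d)) (n : ℕ) : ℝ :=
  -Real.logb 2 (μ (Qcube d n x)).toReal

theorem ae_measure_Qcube_ne_zero (d : ℕ) (μ : Measure (EuclideanSpace ℝ (Fin d))) :
    ∀ᵐ x ∂μ, ∀ n, μ (Qcube d n x) ≠ 0 := by
  simp only [Qcube_eq_preimage]
  exact ae_all_iff.2 fun n => ae_measure_preimage_singleton_ne_zero (measurable_dyadicIdx d n)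

variable [IsFiniteMeasure μ]

theorem monotone_dyadicInformation (hx : ∀ n, μ (Qcube d n x) ≠ 0) :
    Monotone (dyadicInformation d μ x) := by
  intro m n hmn
  exact neg_le_neg <| Real.logb_le_logb_of_le one_lt_two
    (ENNReal.toReal_pos (hx n) (measure_ne_top μ _))
    (ENNReal.toReal_mono (measure_ne_top μ _) (measure_mono (antitone_Qcube x hmn)))

theorem condInformation_dyadicDigit (hn : μ (Qcube d n x) ≠ 0)
    (hnℓ : μ (Qcube d (n + ℓ) x) ≠ 0) :
    condInformation (dyadicDigit d ℓ n) (dyadicIdx d n) μ x =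
      dyadicInformation d μ x (n + ℓ) - dyadicInformation d μ x n := by
  have hn' := (ENNReal.toReal_pos hn (measure_ne_top μ _)).ne'
  have hnℓ' := (ENNReal.toReal_pos hnℓ (measure_ne_top μ _)).ne'
  rw [Qcube_eq_preimage] at hn
  rw [condInformation, information, condDistrib_real_singleton (measurable_dyadicIdx d n)
    (measurable_dyadicDigit d ℓ n) hn, ← Qcube_add_eq_inter, ← Qcube_eq_preimage, measureReal_def,
    measureReal_def, Real.logb_div hnℓ' hn', dyadicInformation, dyadicInformation]
  ring

end Dyadic

theorem stmt3_general (d ℓ : ℕ) (hℓ : 0 < ℓ) (μ : Measure (EuclideanSpace ℝ (Fin d)))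
    [IsFiniteMeasure μ] :
    ∀ᵐ x ∂μ,
      Filter.Tendsto (fun n : ℕ =>
          (1 / (n : ℝ)) * (-(Real.logb 2 (μ (Qcube d n x)).toReal) -
            (1 / (ℓ : ℝ)) * ∑ i ∈ Finset.Icc 1 n, condEntropy' d ℓ i μ x))
        atTop (nhds 0) := by
  filter_upwards [ae_measure_Qcube_ne_zero d μ,
    ae_tendsto_condInformation_div (measurable_dyadicIdx d) (measurable_dyadicDigit d ℓ),
    ae_tendsto_sum_condInformation_sub_entropy_div (ℓ := ℓ) (X := fun i => dyadicIdx d (i + 1))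
      (Y := fun i => dyadicDigit d ℓ (i + 1)) (fun i => measurable_dyadicIdx d (i + 1))
      (fun i j hij => monotone_comap_dyadicIdx d (Nat.add_le_add_right hij 1))
      (fun i => add_right_comm i ℓ 1 ▸ measurable_comap_dyadicDigit d ℓ (i + 1))]
    with x hx hstep havg
  simp only [condInformation_dyadicDigit (hx _) (hx _), ← condEntropy'_eq_shannonEntropy (hx _)]
    at hstep havg
  exact tendsto_sub_average_of_increments hℓ (monotone_dyadicInformation hx) hstep havg

/-- (Local entropy averages.) For a Borel probability measure `μ` on
`[0,1)^d` giving zero mass to the boundaries of all dyadic cubes and `ℓ ∈ ℕ`, for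
`μ`-a.e. `x`,
`(1/n)·(−log₂ μ(Q_n(x)) − (1/ℓ)·Σ_{i=1}^n H(μ_ℓ^{Q_i(x)})) → 0` as `n → ∞`. -/
theorem stmt3 (d ℓ : ℕ) (hd : 0 < d) (hℓ : 0 < ℓ)
    (μ : Measure (EuclideanSpace ℝ (Fin d))) [IsProbabilityMeasure μ]
    (hsupp : μ (unitCube d) = 1)
    (hbd : ∀ Q, IsDyadicCube d Q → μ (frontier Q) = 0) :
    ∀ᵐ x ∂μ,
      Filter.Tendsto (fun n : ℕ =>
          (1 / (n : ℝ)) * (-(Real.logb 2 (μ (Qcube d n x)).toReal) -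
            (1 / (ℓ : ℝ)) * ∑ i ∈ Finset.Icc 1 n, condEntropy' d ℓ i μ x))
        atTop (nhds 0) :=
  stmt3_general d ℓ hℓ μ
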